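/- Let C be a complex n×n matrix with Re C = (C + C*)/2 positive definite, and let μ_C be the complex Gaussian probability measure on ℂⁿ with density (πⁿ det C)^{−1} e^{−⟨z, C^{−1} z⟩} with respect to Lebesgue measure. Then for any p ∈ ℕ* and any indices i_1,…,i_p, j_1,…,j_p ∈ {1,…,n}, the complex Wick theorem holds: ∫_{ℂⁿ} conj(z_{j_1})⋯conj(z_{j_p}) · z_{i_1}⋯z_{i_p} dμ_C(z) = ∑_{π∈S_p} ∏_{k=1}^p C_{i_k, j_{π(k)}}. -/

import Mathlib

/-!
Write `A = C⁻¹`. Two facts about the Gaussian weight `exp (-⟨z, A z⟩)` give the theorem.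

*Normalization.* Factoring `Re C = Bᴴ B` and applying the spectral theorem to the Hermitian matrix
`-I • ((Bᴴ)⁻¹ C B⁻¹ - 1)` gives a congruence `C = Tᴴ diag(e) T` with `Re e_k > 0`, hence also
`A = Sᴴ diag(d) S` with `Re d_k > 0` (`exists_diagonal_congruence_inv`). The change of variables
`w = S z` splits the Gaussian integral into one-dimensional ones, with value `πⁿ / det A`
(`integral_gaussian_quadratic`). The same congruence gives the coercivity
`Re ⟨z, A z⟩ ≥ ε ∑ ‖z_k‖²`, so that polynomial times Gaussian is integrable.

*Integration by parts.* As `∂/∂z̄_l` of the weight is `-(A z)_l` times the weight,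
`∫ (A z)_l q(z, z̄) e^{-⟨z, A z⟩} = ∫ (∂q/∂z̄_l) e^{-⟨z, A z⟩}` for every polynomial `q`
(`integral_by_parts`). Polynomials in `z` and `z̄` are represented by elements of
`MvPolynomial (Fin n ⊕ Fin n) ℂ`, so that `∂/∂z̄_l` is the algebraic derivation `pderiv (inr l)`.

Since `z_{i_0} = ∑_l C_{i_0 l} (A z)_l`, integration by parts removes `z_{i_0}` together with one
factor `z̄_{j_m}`, at the price of `C_{i_0 j_m}`, summed over `m`. This is the expansion of
`∑_π ∏_k C_{i_k j_{π(k)}}` along its first row (`sum_perm_succ`), and induction on `p` concludes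
(`wick_integral`).
-/


open scoped BigOperators ComplexConjugate Real ComplexOrder
open MeasureTheory Matrix

noncomputable section

/-- The density of the complex Gaussian probability measure `μ_C` with covariance `C`,
with respect to Lebesgue measure on `ℂⁿ`. -/
def gaussDensity (n : ℕ) (C : Matrix (Fin n) (Fin n) ℂ) (z : Fin n → ℂ) : ℂ :=
  ((Real.pi : ℂ) ^ n * C.det)⁻¹ * Complex.exp (-(star z ⬝ᵥ C⁻¹.mulVec z))

/-! ### Simultaneous diagonalization by congruence -/

open scoped MatrixOrder Matrix.Norms.L2Operator in
lemma exists_eq_conjTranspose_mul_self {n : ℕ} {H : Matrix (Fin n) (Fin n) ℂ}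
    (hH : H.PosSemidef) : ∃ B : Matrix (Fin n) (Fin n) ℂ, H = Bᴴ * B :=
  CStarAlgebra.nonneg_iff_eq_star_mul_self.mp hH.nonneg

/-- A matrix with positive definite real part is congruent to a diagonal matrix whose entries have
positive real part: a congruence first turns the real part into the identity, and a unitary one
then diagonalizes the skew-Hermitian part. -/
lemma exists_diagonal_congruence {n : ℕ} (C : Matrix (Fin n) (Fin n) ℂ)
    (hC : (((1 : ℂ) / 2) • (C + Cᴴ)).PosDef) :
    ∃ (T : Matrix (Fin n) (Fin n) ℂ) (e : Fin n → ℂ), IsUnit T.det ∧ (∀ k, 0 < (e k).re) ∧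
      C = Tᴴ * diagonal e * T := by
  obtain ⟨B, hB⟩ := exists_eq_conjTranspose_mul_self hC.posSemidef
  have hBdet : IsUnit B.det := by
    have h := hC.isUnit
    rw [hB, Matrix.isUnit_iff_isUnit_det, det_mul] at h
    exact isUnit_of_mul_isUnit_right h
  have hBs : IsUnit (Bᴴ).det := by rw [det_conjTranspose]; exact hBdet.star
  have hsum : C + Cᴴ = (2 : ℂ) • (Bᴴ * B) := by rw [← hB, smul_smul]; norm_num
  set N : Matrix (Fin n) (Fin n) ℂ := (Bᴴ)⁻¹ * C * B⁻¹ with hN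
  have hNs : Nᴴ = (Bᴴ)⁻¹ * Cᴴ * B⁻¹ := by
    rw [hN]
    simp only [conjTranspose_mul, conjTranspose_nonsing_inv, conjTranspose_conjTranspose, mul_assoc]
  have hNN : N + Nᴴ = (2 : ℂ) • (1 : Matrix (Fin n) (Fin n) ℂ) := by
    rw [hNs, hN, ← add_mul, ← mul_add, hsum, mul_smul_comm, smul_mul_assoc, mul_assoc, mul_assoc,
      mul_nonsing_inv _ hBdet, mul_one, nonsing_inv_mul _ hBs]
  have hM : ((-Complex.I) • (N - 1)).IsHermitian := by
    have h : Nᴴ = (2 : ℂ) • (1 : Matrix (Fin n) (Fin n) ℂ) - N := by rw [← hNN]; abel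
    rw [IsHermitian, conjTranspose_smul, conjTranspose_sub, h, conjTranspose_one, two_smul]
    simp only [star_neg, Complex.star_def, Complex.conj_I, neg_neg]
    rw [neg_smul, ← smul_neg]
    congr 1
    abel
  have hsp := hM.spectral_theorem
  set U : Matrix (Fin n) (Fin n) ℂ := hM.eigenvectorUnitary.1 with hU
  set d := hM.eigenvalues
  have hUU : U * Uᴴ = 1 := by
    have := (Unitary.mem_iff.mp hM.eigenvectorUnitary.2).2
    exact this
  have hUdet : IsUnit (Uᴴ).det := by
    have h := congrArg Matrix.det hUU
    rw [det_mul, det_one] at h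
    exact IsUnit.of_mul_eq_one_right _ h
  have hNd : N = U * diagonal (fun k => 1 + Complex.I * d k) * Uᴴ := by
    have h1 : N = 1 + Complex.I • ((-Complex.I) • (N - 1)) := by
      rw [smul_smul]; simp
    have h2 : diagonal (fun k => 1 + Complex.I * (d k : ℂ))
        = 1 + Complex.I • diagonal (fun k => (d k : ℂ)) := by
      ext a b
      by_cases hab : a = b
      · subst hab; simp
      · simp [hab]
    rw [h1, hsp, h2, mul_add, add_mul, mul_one, hUU, Unitary.conjStarAlgAut_apply]
    simp [star_eq_conjTranspose, Function.comp_def, hU]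
  refine ⟨Uᴴ * B, fun k => 1 + Complex.I * d k, ?_, fun k => by simp, ?_⟩
  · rw [det_mul]; exact hUdet.mul hBdet
  · have : C = Bᴴ * N * B := by
      rw [hN, mul_assoc, mul_assoc, nonsing_inv_mul _ hBdet, mul_one, ← mul_assoc,
        mul_nonsing_inv _ hBs, one_mul]
    rw [this, hNd]
    simp only [conjTranspose_mul, conjTranspose_conjTranspose, mul_assoc]

lemma exists_diagonal_congruence_inv {n : ℕ} (C : Matrix (Fin n) (Fin n) ℂ)
    (hC : (((1 : ℂ) / 2) • (C + Cᴴ)).PosDef) :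
    ∃ (S : Matrix (Fin n) (Fin n) ℂ) (e : Fin n → ℂ), IsUnit S.det ∧ IsUnit C.det ∧
      (∀ k, 0 < (e k).re) ∧ C⁻¹ = Sᴴ * diagonal e * S := by
  obtain ⟨T, e, hT, he, h⟩ := exists_diagonal_congruence C hC
  have hTs : IsUnit (Tᴴ).det := by rw [det_conjTranspose]; exact hT.star
  have he0 : ∀ k, e k ≠ 0 := fun k h0 => by have := he k; simp [h0] at this
  have hd : diagonal e * diagonal (fun k => (e k)⁻¹) = 1 := by
    rw [diagonal_mul_diagonal, ← diagonal_one]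
    congr 1; ext k; exact mul_inv_cancel₀ (he0 k)
  refine ⟨(Tᴴ)⁻¹, fun k => (e k)⁻¹, ?_, ?_, fun k => ?_, ?_⟩
  · exact isUnit_nonsing_inv_det _ hTs
  · rw [h, det_mul, det_mul, det_diagonal]
    exact (hTs.mul (isUnit_iff_ne_zero.mpr (Finset.prod_ne_zero_iff.mpr fun k _ => he0 k))).mul hT
  · rw [Complex.inv_re]
    exact div_pos (he k) (Complex.normSq_pos.mpr (he0 k))
  · apply inv_eq_right_inv
    rw [conjTranspose_nonsing_inv, conjTranspose_conjTranspose, h]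
    calc Tᴴ * diagonal e * T * (T⁻¹ * diagonal (fun k => (e k)⁻¹) * (Tᴴ)⁻¹)
        = Tᴴ * diagonal e * (T * T⁻¹) * diagonal (fun k => (e k)⁻¹) * (Tᴴ)⁻¹ := by
          simp only [mul_assoc]
      _ = Tᴴ * (diagonal e * diagonal (fun k => (e k)⁻¹)) * (Tᴴ)⁻¹ := by
          rw [mul_nonsing_inv _ hT, mul_one]; simp only [mul_assoc]
      _ = 1 := by rw [hd, mul_one, mul_nonsing_inv _ hTs]

/-! ### The Gaussian integral and coercivity of the quadratic form -/

lemma quadratic_form_congruence {n : ℕ} (S : Matrix (Fin n) (Fin n) ℂ) (e z : Fin n → ℂ) :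
    star z ⬝ᵥ (Sᴴ * diagonal e * S) *ᵥ z = ∑ k, e k * (‖(S *ᵥ z) k‖ : ℂ) ^ 2 := by
  rw [← mulVec_mulVec, ← mulVec_mulVec, dotProduct_mulVec, ← star_mulVec, dotProduct]
  refine Finset.sum_congr rfl fun k _ => ?_
  rw [mulVec_diagonal, Pi.star_apply, Complex.star_def, ← Complex.conj_mul']
  ring

/-- Linear change of variables; the real Jacobian of the complex-linear map `S` is `|det S|²`. -/
lemma integral_comp_mulVec {n : ℕ} (S : Matrix (Fin n) (Fin n) ℂ) (hS : IsUnit S.det)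
    (f : (Fin n → ℂ) → ℂ) :
    ∫ z, f (S *ᵥ z) = (Complex.normSq S.det : ℂ)⁻¹ * ∫ w, f w := by
  set L : (Fin n → ℂ) →ₗ[ℝ] (Fin n → ℂ) := (Matrix.toLin' S).restrictScalars ℝ with hL
  have hdet : LinearMap.det L = Complex.normSq S.det := by
    rw [hL, LinearMap.det_restrictScalars, LinearMap.det_toLin', Algebra.norm_complex_apply]
  have hpos : 0 < Complex.normSq S.det := Complex.normSq_pos.mpr hS.ne_zero
  have hne : LinearMap.det L ≠ 0 := by rw [hdet]; exact hpos.ne'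
  have hmap := Measure.map_linearMap_addHaar_eq_smul_addHaar (volume : Measure (Fin n → ℂ)) hne
  have hemb : MeasurableEmbedding L :=
    (LinearEquiv.ofIsUnitDet (M := Fin n → ℂ) (M' := Fin n → ℂ) (f := L)
      (v := Module.finBasis ℝ _) (v' := Module.finBasis ℝ _)
      (by rw [LinearMap.det_toMatrix]; exact hne.isUnit)).toContinuousLinearEquiv
        |>.toHomeomorph.measurableEmbedding
  have h := hemb.integral_map (μ := volume) f
  rw [hmap, integral_smul_measure, hdet] at h
  rw [ENNReal.toReal_ofReal (abs_nonneg _), abs_of_pos (inv_pos.mpr hpos)] at h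
  rw [Complex.real_smul] at h
  push_cast at h
  exact h.symm

lemma integral_gaussian_quadratic {n : ℕ} (S : Matrix (Fin n) (Fin n) ℂ) (e : Fin n → ℂ)
    (hS : IsUnit S.det) (he : ∀ k, 0 < (e k).re) :
    ∫ z : Fin n → ℂ, Complex.exp (-(star z ⬝ᵥ (Sᴴ * diagonal e * S) *ᵥ z))
      = (π : ℂ) ^ n * (Sᴴ * diagonal e * S).det⁻¹ := by
  simp_rw [quadratic_form_congruence]
  rw [integral_comp_mulVec S hS (fun w => Complex.exp (-∑ k, e k * (‖w k‖ : ℂ) ^ 2))]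
  have h1 : ∀ w : Fin n → ℂ, Complex.exp (-∑ k, e k * (‖w k‖ : ℂ) ^ 2)
      = ∏ k, Complex.exp (-e k * (‖w k‖ : ℂ) ^ 2) := fun w => by
    rw [← Complex.exp_sum, ← Finset.sum_neg_distrib]
    simp only [neg_mul]
  simp_rw [h1]
  rw [integral_fintype_prod_volume_eq_prod
    (fun k (x : ℂ) => Complex.exp (-e k * (‖x‖ : ℂ) ^ 2))]
  have h2 : ∀ k, ∫ x : ℂ, Complex.exp (-e k * (‖x‖ : ℂ) ^ 2) = π / e k := fun k => by
    rw [GaussianFourier.integral_cexp_neg_mul_sq_norm (he k), Complex.finrank_real_complex]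
    norm_num
  simp_rw [h2]
  rw [det_mul, det_mul, det_diagonal, det_conjTranspose, Finset.prod_div_distrib,
    Complex.normSq_eq_conj_mul_self, Finset.prod_const, Finset.card_univ, Fintype.card_fin,
    Complex.star_def]
  simp only [div_eq_mul_inv, mul_inv]
  ring

/-- The real part of the quadratic form is positive away from `0`, hence bounded below on the
compact unit sphere (of the sup norm), hence coercive by homogeneity. -/
lemma exists_coercive {n : ℕ} (S : Matrix (Fin n) (Fin n) ℂ) (e : Fin n → ℂ)
    (hS : IsUnit S.det) (he : ∀ k, 0 < (e k).re) :
    ∃ ε > 0, ∀ z : Fin n → ℂ,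
      ε * ∑ k, ‖z k‖ ^ 2 ≤ (star z ⬝ᵥ (Sᴴ * diagonal e * S) *ᵥ z).re := by
  set q : (Fin n → ℂ) → ℝ := fun z => ∑ k, (e k).re * ‖(S *ᵥ z) k‖ ^ 2 with hq
  have hqre : ∀ z, (star z ⬝ᵥ (Sᴴ * diagonal e * S) *ᵥ z).re = q z := fun z => by
    rw [quadratic_form_congruence, Complex.re_sum]
    refine Finset.sum_congr rfl fun k _ => ?_
    rw [← Complex.ofReal_pow, Complex.re_mul_ofReal]
  have hqpos : ∀ z, z ≠ 0 → 0 < q z := fun z hz => by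
    have hSz : S *ᵥ z ≠ 0 := fun h0 => hz <| by
      have := congrArg (fun w => S⁻¹ *ᵥ w) h0
      simpa [mulVec_mulVec, nonsing_inv_mul _ hS] using this
    obtain ⟨k, hk⟩ := Function.ne_iff.mp hSz
    refine Finset.sum_pos' (fun l _ => mul_nonneg (he l).le (sq_nonneg _)) ⟨k, Finset.mem_univ _, ?_⟩
    exact mul_pos (he k) (pow_pos (norm_pos_iff.mpr hk) 2)
  have hqc : Continuous q := by
    refine continuous_finsetSum _ fun k _ => continuous_const.mul (Continuous.pow (Continuous.norm ?_) 2)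
    exact (continuous_apply k).comp (Continuous.matrix_mulVec continuous_const continuous_id)
  have hqs : ∀ (t : ℝ) z, q (t • z) = t ^ 2 * q z := fun t z => by
    simp only [hq, mulVec_smul, Pi.smul_apply, norm_smul, Finset.mul_sum, mul_pow,
      Real.norm_eq_abs, sq_abs]
    exact Finset.sum_congr rfl fun k _ => by ring
  obtain ⟨m, hm, hmq⟩ : ∃ m > 0, ∀ z ∈ Metric.sphere (0 : Fin n → ℂ) 1, m ≤ q z := by
    rcases (Metric.sphere (0 : Fin n → ℂ) 1).eq_empty_or_nonempty with h | h
    · exact ⟨1, one_pos, by simp [h]⟩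
    · obtain ⟨z₀, hz₀, hmin⟩ := (isCompact_sphere (0 : Fin n → ℂ) 1).exists_isMinOn h hqc.continuousOn
      refine ⟨q z₀, hqpos _ ?_, fun z hz => hmin hz⟩
      rintro rfl
      simp at hz₀
  have hmq' : ∀ z, m * ‖z‖ ^ 2 ≤ q z := fun z => by
    rcases eq_or_ne z 0 with rfl | hz
    · simp [hq]
    have hz' : ‖z‖ ≠ 0 := norm_ne_zero_iff.mpr hz
    have h := hmq (‖z‖⁻¹ • z) (by simp [norm_smul, hz'])
    rw [hqs] at h
    calc m * ‖z‖ ^ 2 ≤ ((‖z‖⁻¹) ^ 2 * q z) * ‖z‖ ^ 2 := by gcongr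
      _ = q z := by field_simp
  refine ⟨m / (n + 1), by positivity, fun z => ?_⟩
  rw [hqre]
  refine le_trans ?_ (hmq' z)
  have h1 : ∑ k, ‖z k‖ ^ 2 ≤ (n + 1) * ‖z‖ ^ 2 := by
    calc ∑ k, ‖z k‖ ^ 2 ≤ ∑ _k : Fin n, ‖z‖ ^ 2 :=
          Finset.sum_le_sum fun k _ => by gcongr; exact norm_le_pi_norm z k
      _ = n * ‖z‖ ^ 2 := by simp
      _ ≤ _ := by nlinarith [sq_nonneg ‖z‖]
  calc m / (n + 1) * ∑ k, ‖z k‖ ^ 2 ≤ m / (n + 1) * ((n + 1) * ‖z‖ ^ 2) := by gcongr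
    _ = m * ‖z‖ ^ 2 := by field_simp

/-! ### Polynomials in `z` and `z̄` -/

/-- Evaluation at `z` of a polynomial in `z` and `z̄`: the variable `inl l` stands for `z_l` and the
variable `inr l` for its conjugate. -/
def wirtEval {n : ℕ} (z : Fin n → ℂ) : MvPolynomial (Fin n ⊕ Fin n) ℂ →ₐ[ℂ] ℂ :=
  MvPolynomial.aeval (Sum.elim z fun l => conj (z l))

lemma wirtEval_inl {n : ℕ} (z : Fin n → ℂ) (l : Fin n) :
    wirtEval z (MvPolynomial.X (Sum.inl l)) = z l := by simp [wirtEval]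

lemma wirtEval_inr {n : ℕ} (z : Fin n → ℂ) (l : Fin n) :
    wirtEval z (MvPolynomial.X (Sum.inr l)) = conj (z l) := by simp [wirtEval]

lemma wirtEval_C {n : ℕ} (z : Fin n → ℂ) (a : ℂ) :
    wirtEval z (MvPolynomial.C a) = a := by simp [wirtEval]

/-- The polynomial `(A z)_l`. -/
def rowPoly {n : ℕ} (A : Matrix (Fin n) (Fin n) ℂ) (l : Fin n) :
    MvPolynomial (Fin n ⊕ Fin n) ℂ :=
  ∑ b, MvPolynomial.C (A l b) * MvPolynomial.X (Sum.inl b)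

/-- The polynomial `⟨z, A z⟩`. -/
def quadPoly {n : ℕ} (A : Matrix (Fin n) (Fin n) ℂ) : MvPolynomial (Fin n ⊕ Fin n) ℂ :=
  ∑ a, MvPolynomial.X (Sum.inr a) * rowPoly A a

lemma wirtEval_quadPoly {n : ℕ} (A : Matrix (Fin n) (Fin n) ℂ) (z : Fin n → ℂ) :
    wirtEval z (quadPoly A) = star z ⬝ᵥ A *ᵥ z := by
  simp only [quadPoly, rowPoly, map_sum, map_mul, wirtEval_inl, wirtEval_inr, wirtEval_C,
    dotProduct, mulVec, Pi.star_apply, Complex.star_def]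

lemma pderiv_quadPoly {n : ℕ} (A : Matrix (Fin n) (Fin n) ℂ) (l : Fin n) :
    MvPolynomial.pderiv (Sum.inr l) (quadPoly A) = rowPoly A l := by
  simp [quadPoly, rowPoly, MvPolynomial.pderiv_X, Derivation.leibniz, Pi.single_apply]

lemma continuous_wirtEval {n : ℕ} (q : MvPolynomial (Fin n ⊕ Fin n) ℂ) :
    Continuous fun z : Fin n → ℂ => wirtEval z q := by
  induction q using MvPolynomial.induction_on with
  | C a => simpa only [wirtEval_C] using continuous_const
  | add p q hp hq => simp only [map_add]; exact hp.add hq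
  | mul_X p s hp =>
    simp only [map_mul]
    refine hp.mul ?_
    rcases s with l | l
    · simpa only [wirtEval_inl] using continuous_apply l
    · simp only [wirtEval_inr]; exact Complex.continuous_conj.comp (continuous_apply l)

/-- The derivative in the real direction `c e_l` is `c ∂/∂z_l + c̄ ∂/∂z̄_l`. -/
lemma hasDerivAt_wirtEval {n : ℕ} (q : MvPolynomial (Fin n ⊕ Fin n) ℂ) (z : Fin n → ℂ)
    (l : Fin n) (c : ℂ) :
    HasDerivAt (fun t : ℝ => wirtEval (z + t • (Pi.single l c : Fin n → ℂ)) q)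
      (c * wirtEval z (MvPolynomial.pderiv (Sum.inl l) q)
        + conj c * wirtEval z (MvPolynomial.pderiv (Sum.inr l) q)) 0 := by
  have hz : z + (0 : ℝ) • (Pi.single l c : Fin n → ℂ) = z := by simp
  induction q using MvPolynomial.induction_on with
  | C a => simpa [wirtEval_C] using hasDerivAt_const (0 : ℝ) a
  | add p q hp hq =>
    simp only [map_add]
    exact (hp.add hq).congr_deriv (by ring)
  | mul_X p s hp =>
    have hcoord : ∀ k, HasDerivAt (fun t : ℝ => (z + t • (Pi.single l c : Fin n → ℂ)) k)
        ((Pi.single l c : Fin n → ℂ) k) 0 := fun k => by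
      have h := ((hasDerivAt_id (0 : ℝ)).smul_const ((Pi.single l c : Fin n → ℂ) k)).const_add (z k)
      simpa using h
    rcases s with k | k
    · have h := hp.mul (hcoord k)
      simp only [hz] at h
      simp only [map_mul, wirtEval_inl, Derivation.leibniz, MvPolynomial.pderiv_X, map_add,
        smul_eq_mul]
      refine h.congr_deriv ?_
      rcases eq_or_ne k l with rfl | hkl
      · simp; ring
      · simp [hkl]; ring
    · have h := hp.mul ((hcoord k).star)
      simp only [hz] at h
      simp only [map_mul, wirtEval_inr, Derivation.leibniz, MvPolynomial.pderiv_X, map_add,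
        smul_eq_mul]
      refine h.congr_deriv ?_
      rcases eq_or_ne k l with rfl | hkl
      · simp; ring
      · simp [hkl]; ring

/-- Polynomials grow more slowly than any Gaussian. -/
lemma wirtEval_growth {n : ℕ} (q : MvPolynomial (Fin n ⊕ Fin n) ℂ) :
    ∀ δ > 0, ∃ K, 0 ≤ K ∧ ∀ z : Fin n → ℂ,
      ‖wirtEval z q‖ ≤ K * Real.exp (δ * ∑ k, ‖z k‖ ^ 2) := by
  induction q using MvPolynomial.induction_on with
  | C a =>
    intro δ hδ
    refine ⟨‖a‖, norm_nonneg _, fun z => ?_⟩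
    rw [wirtEval_C]
    exact le_mul_of_one_le_right (norm_nonneg _) (Real.one_le_exp (by positivity))
  | add p q hp hq =>
    intro δ hδ
    obtain ⟨K, hK, h⟩ := hp δ hδ
    obtain ⟨K', hK', h'⟩ := hq δ hδ
    refine ⟨K + K', by positivity, fun z => ?_⟩
    rw [map_add, add_mul]
    exact (norm_add_le _ _).trans (add_le_add (h z) (h' z))
  | mul_X p s hp =>
    intro δ hδ
    obtain ⟨K, hK, h⟩ := hp (δ / 2) (by positivity)
    refine ⟨K * (1 + 2 / δ), by positivity, fun z => ?_⟩
    have hX : ∀ l, ‖z l‖ ≤ (1 + 2 / δ) * Real.exp (δ / 2 * ∑ k, ‖z k‖ ^ 2) := fun l => by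
      have h1 : ‖z l‖ ^ 2 ≤ ∑ k, ‖z k‖ ^ 2 :=
        Finset.single_le_sum (f := fun k => ‖z k‖ ^ 2) (fun k _ => sq_nonneg _) (Finset.mem_univ l)
      have h2 := Real.add_one_le_exp (δ / 2 * ∑ k, ‖z k‖ ^ 2)
      calc ‖z l‖ ≤ 1 + ‖z l‖ ^ 2 := by nlinarith [sq_nonneg (‖z l‖ - 1), sq_nonneg ‖z l‖]
        _ ≤ 1 + ∑ k, ‖z k‖ ^ 2 := by gcongr
        _ ≤ (1 + ∑ k, ‖z k‖ ^ 2) + (2 / δ + δ / 2 * ∑ k, ‖z k‖ ^ 2) := by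
          have : 0 ≤ ∑ k, ‖z k‖ ^ 2 := Finset.sum_nonneg fun k _ => sq_nonneg _
          have : 0 ≤ 2 / δ + δ / 2 * ∑ k, ‖z k‖ ^ 2 := by positivity
          linarith
        _ = (1 + 2 / δ) * (δ / 2 * ∑ k, ‖z k‖ ^ 2 + 1) := by field_simp; ring
        _ ≤ _ := by gcongr
    have hs : ‖wirtEval z (MvPolynomial.X s)‖
        ≤ (1 + 2 / δ) * Real.exp (δ / 2 * ∑ k, ‖z k‖ ^ 2) := by
      rcases s with l | l
      · rw [wirtEval_inl]; exact hX l
      · rw [wirtEval_inr, RCLike.norm_conj]; exact hX l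
    rw [map_mul, norm_mul]
    calc _ ≤ (K * Real.exp (δ / 2 * ∑ k, ‖z k‖ ^ 2))
          * ((1 + 2 / δ) * Real.exp (δ / 2 * ∑ k, ‖z k‖ ^ 2)) :=
        mul_le_mul (h z) hs (norm_nonneg _) (by positivity)
      _ = K * (1 + 2 / δ) * (Real.exp (δ / 2 * ∑ k, ‖z k‖ ^ 2)
          * Real.exp (δ / 2 * ∑ k, ‖z k‖ ^ 2)) := by ring
      _ = _ := by rw [← Real.exp_add]; congr 2; ring

/-! ### Integrability and integration by parts -/

lemma integrable_real_gaussian {n : ℕ} {δ : ℝ} (hδ : 0 < δ) :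
    Integrable fun z : Fin n → ℂ => Real.exp (-δ * ∑ k, ‖z k‖ ^ 2) := by
  have h1 : Integrable fun x : ℂ => Real.exp (-δ * ‖x‖ ^ 2) := by
    have h := (GaussianFourier.integrable_cexp_neg_mul_sq_norm_add (V := ℂ) (b := (δ : ℂ))
      (by simpa using hδ) 0 0).re
    refine h.congr (Filter.Eventually.of_forall fun x => ?_)
    have : (-(δ : ℂ) * (‖x‖ : ℂ) ^ 2 + 0 * ((inner ℝ (0 : ℂ) x : ℝ) : ℂ))
        = ((-δ * ‖x‖ ^ 2 : ℝ) : ℂ) := by push_cast; ring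
    simp only [this]
    exact Complex.exp_ofReal_re _
  have h := Integrable.fintype_prod (ι := Fin n) (μ := fun _ => (volume : Measure ℂ))
    (f := fun _ x => Real.exp (-δ * ‖x‖ ^ 2)) fun _ => h1
  refine h.congr (Filter.Eventually.of_forall fun z => ?_)
  simp only [← Real.exp_sum, Finset.mul_sum]

lemma integrable_wirtEval_mul_exp {n : ℕ} (A : Matrix (Fin n) (Fin n) ℂ) {ε : ℝ} (hε : 0 < ε)
    (hA : ∀ z : Fin n → ℂ, ε * ∑ k, ‖z k‖ ^ 2 ≤ (star z ⬝ᵥ A *ᵥ z).re)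
    (q : MvPolynomial (Fin n ⊕ Fin n) ℂ) :
    Integrable fun z : Fin n → ℂ => wirtEval z q * Complex.exp (-wirtEval z (quadPoly A)) := by
  obtain ⟨K, hK, h⟩ := wirtEval_growth q (ε / 2) (by positivity)
  refine ((integrable_real_gaussian (n := n) (half_pos hε)).const_mul K).mono'
    ((continuous_wirtEval q).mul
      (Complex.continuous_exp.comp (continuous_wirtEval _).neg)).aestronglyMeasurable
    (Filter.Eventually.of_forall fun z => ?_)
  rw [norm_mul, Complex.norm_exp, wirtEval_quadPoly, Complex.neg_re]
  calc _ ≤ (K * Real.exp (ε / 2 * ∑ k, ‖z k‖ ^ 2)) * Real.exp (-(ε * ∑ k, ‖z k‖ ^ 2)) := by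
        gcongr
        · exact h z
        · exact hA z
    _ = _ := by rw [mul_assoc, ← Real.exp_add]; congr 2; ring

/-- Integration by parts in `z̄_l`, using `∂/∂z̄_l ⟨z, A z⟩ = (A z)_l`. -/
lemma integral_by_parts {n : ℕ} (A : Matrix (Fin n) (Fin n) ℂ) {ε : ℝ} (hε : 0 < ε)
    (hA : ∀ z : Fin n → ℂ, ε * ∑ k, ‖z k‖ ^ 2 ≤ (star z ⬝ᵥ A *ᵥ z).re)
    (q : MvPolynomial (Fin n ⊕ Fin n) ℂ) (l : Fin n) :
    ∫ z : Fin n → ℂ, wirtEval z (rowPoly A l * q) * Complex.exp (-wirtEval z (quadPoly A))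
      = ∫ z : Fin n → ℂ, wirtEval z (MvPolynomial.pderiv (Sum.inr l) q)
          * Complex.exp (-wirtEval z (quadPoly A)) := by
  have hint := integrable_wirtEval_mul_exp A hε hA
  -- `D s` is the polynomial factor of `∂_s (q e^{-⟨z, A z⟩})`.
  set D : Fin n ⊕ Fin n → MvPolynomial (Fin n ⊕ Fin n) ℂ := fun s =>
    MvPolynomial.pderiv s q - q * MvPolynomial.pderiv s (quadPoly A) with hD
  have hzero : ∀ c : ℂ, c * (∫ z : Fin n → ℂ, wirtEval z (D (Sum.inl l))
        * Complex.exp (-wirtEval z (quadPoly A)))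
      + conj c * (∫ z : Fin n → ℂ, wirtEval z (D (Sum.inr l))
        * Complex.exp (-wirtEval z (quadPoly A))) = 0 := fun c => by
    have hg' : ∀ z : Fin n → ℂ,
        c * (wirtEval z (D (Sum.inl l)) * Complex.exp (-wirtEval z (quadPoly A)))
          + conj c * (wirtEval z (D (Sum.inr l)) * Complex.exp (-wirtEval z (quadPoly A)))
        = wirtEval z (MvPolynomial.C c * D (Sum.inl l) + MvPolynomial.C (conj c) * D (Sum.inr l))
          * Complex.exp (-wirtEval z (quadPoly A)) := fun z => by
      simp only [map_add, map_mul, wirtEval_C]; ring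
    rw [← integral_const_mul, ← integral_const_mul,
      ← integral_add ((hint _).const_mul _) ((hint _).const_mul _)]
    simp_rw [hg']
    -- The integral of a line derivative vanishes: integration by parts against the constant `1`.
    have h := integral_bilinear_hasLineDerivAt_right_eq_neg_left_of_integrable
      (μ := (volume : Measure (Fin n → ℂ))) (B := ContinuousLinearMap.mul ℝ ℂ)
      (f := fun _ => 1) (f' := fun _ => 0) (v := Pi.single l c)
      (g := fun z : Fin n → ℂ => wirtEval z q * Complex.exp (-wirtEval z (quadPoly A)))
      (g' := fun z => wirtEval z
          (MvPolynomial.C c * D (Sum.inl l) + MvPolynomial.C (conj c) * D (Sum.inr l))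
        * Complex.exp (-wirtEval z (quadPoly A)))
      (by simp) (by simpa only [ContinuousLinearMap.mul_apply', one_mul] using hint _)
      (by simpa only [ContinuousLinearMap.mul_apply', one_mul] using hint _)
      (fun z _ => hasDerivAt_const (0 : ℝ) (1 : ℂ))
      (fun z _ => by
        have hz : z + (0 : ℝ) • (Pi.single l c : Fin n → ℂ) = z := by simp
        have h1 := hasDerivAt_wirtEval q z l c
        have h2 := (hasDerivAt_wirtEval (quadPoly A) z l c).neg.cexp
        have h3 := h1.mul h2
        simp only [hz, Pi.neg_apply] at h3
        refine HasDerivAt.congr_deriv h3 ?_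
        simp only [hD, map_add, map_mul, map_sub, wirtEval_C]
        ring)
    simpa using h
  -- The directions `e_l` and `I e_l` combine to isolate the `z̄_l`-derivative.
  have h1 := hzero 1
  have hI := hzero Complex.I
  simp only [map_one, one_mul, Complex.conj_I] at h1 hI
  have h0 : ∫ z : Fin n → ℂ, wirtEval z (D (Sum.inr l))
      * Complex.exp (-wirtEval z (quadPoly A)) = 0 := by
    have h4 := congrArg (fun x => -Complex.I * x) hI
    simp only [mul_add, ← mul_assoc, mul_zero] at h4
    simp only [neg_mul, mul_neg, Complex.I_mul_I, neg_neg, one_mul] at h4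
    linear_combination (1 / 2 : ℂ) * h1 - (1 / 2 : ℂ) * h4
  simp only [hD, map_sub, sub_mul, pderiv_quadPoly] at h0
  rw [integral_sub (hint _) (hint _), sub_eq_zero] at h0
  rw [h0, mul_comm]

/-! ### Combinatorics and the induction -/

/-- Leibniz rule for a product over `Fin (p + 1)`. The indices other than `m` are enumerated as
`swap 0 m k.succ`, matching `Equiv.Perm.decomposeFin`. -/
lemma derivation_prod {R A : Type*} [CommRing R] [CommRing A] [Algebra R A]
    (D : Derivation R A A) {p : ℕ} (f : Fin (p + 1) → A) :
    D (∏ k, f k) = ∑ m, D (f m) * ∏ k : Fin p, f (Equiv.swap 0 m k.succ) := by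
  have key : ∀ s : Finset (Fin (p + 1)),
      D (∏ k ∈ s, f k) = ∑ m ∈ s, D (f m) * ∏ k ∈ s.erase m, f k := by
    intro s
    induction s using Finset.induction_on with
    | empty => simp
    | insert a s ha ih =>
      rw [Finset.prod_insert ha, Derivation.leibniz, ih, Finset.sum_insert ha,
        Finset.erase_insert ha, smul_eq_mul, smul_eq_mul, add_comm, mul_comm, Finset.mul_sum]
      congr 1
      refine Finset.sum_congr rfl fun m hm => ?_
      have hne : a ≠ m := fun h => ha (h ▸ hm)
      rw [Finset.erase_insert_of_ne hne, Finset.prod_insert (fun h => ha (Finset.mem_of_mem_erase h))]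
      ring
  rw [key]
  refine Finset.sum_congr rfl fun m _ => ?_
  congr 1
  have himg : Finset.univ.erase m = Finset.univ.image fun k : Fin p => Equiv.swap 0 m k.succ := by
    ext x
    simp only [Finset.mem_erase, Finset.mem_univ, and_true, Finset.mem_image, true_and]
    constructor
    · intro hx
      have h0 : Equiv.swap 0 m x ≠ 0 := fun h => hx <| by
        have h' := congrArg (Equiv.swap 0 m) h
        rwa [Equiv.swap_apply_self, Equiv.swap_apply_left] at h'
      obtain ⟨k, hk⟩ := Fin.exists_succ_eq.mpr h0
      exact ⟨k, by rw [hk, Equiv.swap_apply_self]⟩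
    · rintro ⟨k, rfl⟩ h
      have := (Equiv.swap 0 m).injective (h.trans (Equiv.swap_apply_left 0 m).symm)
      exact Fin.succ_ne_zero k this
  rw [himg, Finset.prod_image]
  intro a _ b _ h
  exact Fin.succ_injective _ ((Equiv.swap 0 m).injective h)

/-- The monomial `z̄_{j_1} ⋯ z̄_{j_p} z_{i_1} ⋯ z_{i_p}`. -/
def wickMonomial {n p : ℕ} (i j : Fin p → Fin n) : MvPolynomial (Fin n ⊕ Fin n) ℂ :=
  (∏ k, MvPolynomial.X (Sum.inr (j k))) * ∏ k, MvPolynomial.X (Sum.inl (i k))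

lemma pderiv_prod_inl {n p : ℕ} (i : Fin p → Fin n) (l : Fin n) :
    MvPolynomial.pderiv (Sum.inr l)
      (∏ k, MvPolynomial.X (Sum.inl (i k)) : MvPolynomial (Fin n ⊕ Fin n) ℂ) = 0 := by
  cases p with
  | zero => simp
  | succ p => rw [derivation_prod]; simp [MvPolynomial.pderiv_X]

lemma pderiv_wick {n p : ℕ} (i : Fin p → Fin n) (j : Fin (p + 1) → Fin n) (l : Fin n) :
    MvPolynomial.pderiv (Sum.inr l)
      ((∏ k, MvPolynomial.X (Sum.inr (j k))) * ∏ k, MvPolynomial.X (Sum.inl (i k)) :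
        MvPolynomial (Fin n ⊕ Fin n) ℂ)
      = ∑ m, if j m = l then wickMonomial i (fun k => j (Equiv.swap 0 m k.succ)) else 0 := by
  rw [Derivation.leibniz, pderiv_prod_inl, smul_zero, zero_add, derivation_prod, smul_eq_mul,
    mul_comm, Finset.sum_mul]
  refine Finset.sum_congr rfl fun m _ => ?_
  rw [MvPolynomial.pderiv_X]
  split_ifs with h
  · subst h; simp [wickMonomial]
  · simp [h]

/-- Expansion of the permanent-like sum along its first row. -/
lemma sum_perm_succ {n p : ℕ} (C : Matrix (Fin n) (Fin n) ℂ) (i j : Fin (p + 1) → Fin n) :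
    ∑ g : Equiv.Perm (Fin (p + 1)), ∏ k, C (i k) (j (g k))
      = ∑ m, C (i 0) (j m) * ∑ g : Equiv.Perm (Fin p),
          ∏ k : Fin p, C (i k.succ) (j (Equiv.swap 0 m (g k).succ)) := by
  rw [← Equiv.sum_comp Equiv.Perm.decomposeFin.symm, Fintype.sum_prod_type]
  refine Finset.sum_congr rfl fun m _ => ?_
  rw [Finset.mul_sum]
  refine Finset.sum_congr rfl fun g _ => ?_
  rw [Fin.prod_univ_succ]
  simp

/-- The Wick formula for the unnormalized Gaussian weight, by induction on `p`. -/
lemma wick_integral {n : ℕ} (C A : Matrix (Fin n) (Fin n) ℂ) (hCA : C * A = 1)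
    {ε : ℝ} (hε : 0 < ε)
    (hA : ∀ z : Fin n → ℂ, ε * ∑ k, ‖z k‖ ^ 2 ≤ (star z ⬝ᵥ A *ᵥ z).re)
    (p : ℕ) (i j : Fin p → Fin n) :
    ∫ z : Fin n → ℂ, wirtEval z (wickMonomial i j) * Complex.exp (-wirtEval z (quadPoly A))
      = (∑ g : Equiv.Perm (Fin p), ∏ k, C (i k) (j (g k)))
        * ∫ z : Fin n → ℂ, Complex.exp (-wirtEval z (quadPoly A)) := by
  have hint := integrable_wirtEval_mul_exp A hε hA
  induction p with
  | zero => simp [wickMonomial]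
  | succ p ih =>
    set q : MvPolynomial (Fin n ⊕ Fin n) ℂ :=
      (∏ k, MvPolynomial.X (Sum.inr (j k))) * ∏ k : Fin p, MvPolynomial.X (Sum.inl (i k.succ))
      with hq
    have hX : (MvPolynomial.X (Sum.inl (i 0)) : MvPolynomial (Fin n ⊕ Fin n) ℂ)
        = ∑ l, MvPolynomial.C (C (i 0) l) * rowPoly A l := by
      have h : ∀ b, ∑ l, C (i 0) l * A l b = if i 0 = b then 1 else 0 := fun b => by
        rw [← Matrix.mul_apply, hCA, Matrix.one_apply]
      simp only [rowPoly, Finset.mul_sum]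
      rw [Finset.sum_comm]
      simp only [← mul_assoc, ← map_mul, ← Finset.sum_mul, ← map_sum, h]
      simp
    have hw : wickMonomial i j = ∑ l, MvPolynomial.C (C (i 0) l) * (rowPoly A l * q) := by
      have : wickMonomial i j = MvPolynomial.X (Sum.inl (i 0)) * q := by
        rw [wickMonomial, Fin.prod_univ_succ (fun k => MvPolynomial.X (Sum.inl (i k))), hq]; ring
      rw [this, hX, Finset.sum_mul]
      simp only [mul_assoc]
    calc ∫ z : Fin n → ℂ, wirtEval z (wickMonomial i j) * Complex.exp (-wirtEval z (quadPoly A))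
        = ∫ z : Fin n → ℂ, ∑ l, C (i 0) l *
            (wirtEval z (rowPoly A l * q) * Complex.exp (-wirtEval z (quadPoly A))) := by
          congr 1; ext z
          rw [hw, map_sum, Finset.sum_mul]
          refine Finset.sum_congr rfl fun l _ => ?_
          rw [map_mul, wirtEval_C, mul_assoc]
      _ = ∑ l, C (i 0) l * ∫ z : Fin n → ℂ, wirtEval z (MvPolynomial.pderiv (Sum.inr l) q)
            * Complex.exp (-wirtEval z (quadPoly A)) := by
          rw [integral_finsetSum _ fun l _ => (hint _).const_mul _]
          refine Finset.sum_congr rfl fun l _ => ?_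
          rw [integral_const_mul, integral_by_parts A hε hA]
      _ = ∑ l, C (i 0) l * ∑ m, if j m = l then
            ∫ z : Fin n → ℂ, wirtEval z
              (wickMonomial (fun k => i k.succ) fun k => j (Equiv.swap 0 m k.succ))
              * Complex.exp (-wirtEval z (quadPoly A)) else 0 := by
          refine Finset.sum_congr rfl fun l _ => ?_
          rw [hq, pderiv_wick (fun k => i k.succ)]
          simp only [map_sum, Finset.sum_mul]
          rw [integral_finsetSum _ fun m _ => hint _]
          congr 1
          refine Finset.sum_congr rfl fun m _ => ?_
          split_ifs <;> simp
      _ = _ := by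
          rw [sum_perm_succ, Finset.sum_mul]
          simp only [Finset.mul_sum]
          rw [Finset.sum_comm]
          refine Finset.sum_congr rfl fun m _ => ?_
          simp only [mul_ite, mul_zero, Finset.sum_ite_eq, Finset.mem_univ, if_true]
          rw [ih, ← Finset.mul_sum, mul_assoc]

/-- **Complex Wick theorem** (Lemma B.3): for a complex `n×n` matrix `C` with positive
definite Hermitian real part, and indices `i_1,…,i_p, j_1,…,j_p`,
`∫ conj(z_{j_1})⋯conj(z_{j_p}) z_{i_1}⋯z_{i_p} dμ_C(z) = ∑_{π∈S_p} ∏_k C_{i_k, j_{π(k)}}`. -/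
theorem complex_wick_theorem (n : ℕ) (C : Matrix (Fin n) (Fin n) ℂ)
    (hC : (((1 : ℂ) / 2) • (C + Cᴴ)).PosDef)
    (p : ℕ) (hp : 1 ≤ p) (i j : Fin p → Fin n) :
    ∫ z : Fin n → ℂ,
        ((∏ k : Fin p, (starRingEnd ℂ) (z (j k))) * (∏ k : Fin p, z (i k)))
          * gaussDensity n C z
      = ∑ g : Equiv.Perm (Fin p), ∏ k : Fin p, C (i k) (j (g k)) := by
  obtain ⟨S, e, hS, hCdet, he, hCinv⟩ := exists_diagonal_congruence_inv C hC
  obtain ⟨ε, hε, hco⟩ := exists_coercive S e hS he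
  have hnorm := integral_gaussian_quadratic S e hS he
  rw [← hCinv] at hco hnorm
  have hwick := wick_integral C C⁻¹ (mul_nonsing_inv _ hCdet) hε hco p i j
  simp only [wirtEval_quadPoly] at hwick
  rw [hnorm, det_nonsing_inv, Ring.inverse_eq_inv', inv_inv] at hwick
  have hz : ∀ z : Fin n → ℂ,
      ((∏ k : Fin p, (starRingEnd ℂ) (z (j k))) * (∏ k : Fin p, z (i k))) * gaussDensity n C z
      = ((π : ℂ) ^ n * C.det)⁻¹ * (wirtEval z (wickMonomial i j)
        * Complex.exp (-(star z ⬝ᵥ C⁻¹ *ᵥ z))) := fun z => by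
    simp only [gaussDensity, wickMonomial, map_mul, map_prod, wirtEval_inl, wirtEval_inr]
    ring
  have hne : (π : ℂ) ^ n * C.det ≠ 0 :=
    mul_ne_zero (pow_ne_zero _ (Complex.ofReal_ne_zero.mpr Real.pi_ne_zero)) hCdet.ne_zero
  simp_rw [hz]
  rw [integral_const_mul, hwick, mul_comm (∑ g : Equiv.Perm (Fin p), _), ← mul_assoc,
    inv_mul_cancel₀ hne, one_mul]
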